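/- arXiv:2007.00460 — 2 statements merged into one kernel-verified Lean document; each statement's English description precedes it below -/
import Mathlib

section
/- Let T : H → H be nonexpansive with Fix T ≠ ∅, λ : [0,∞) → [0,1] measurable with either ∫₀^∞ λ(t)(1−λ(t)) dt = +∞ or inf_{t≥0} λ(t) > 0, and let x be the unique strong global solution of ẋ(t) = λ(t)(T(x(t)) − x(t)), x(0) = x₀. Then the trajectory x is bounded, ∫₀^∞ ‖ẋ(t)‖² dt < ∞, T(x(t)) − x(t) → 0 and ẋ(t) → 0 as t → ∞, and x(t) converges weakly to a fixed point of T. -/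
open Filter MeasureTheory Set Topology
open scoped RealInnerProductSpace


section helpers

variable {H : Type*} [NormedAddCommGroup H] [InnerProductSpace ℝ H]

/-- The residual is nonincreasing along the trajectory. -/
theorem km_residual_antitone
    (T : H → H) (hT : ∀ a b : H, ‖T a - T b‖ ≤ ‖a - b‖)
    (lam : ℝ → ℝ) (hlam : ∀ t ≥ (0:ℝ), lam t ∈ Icc (0:ℝ) 1)
    (x xd : ℝ → H)
    (hx : ∀ t ≥ (0:ℝ), HasDerivAt x (xd t) t)
    (hode : ∀ t ≥ (0:ℝ), xd t = lam t • (T (x t) - x t))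
    (hu : ContinuousOn (fun t => T (x t) - x t) (Ici 0))
    (a b : ℝ) (ha : 0 ≤ a) (hab : a ≤ b) :
    ‖T (x b) - x b‖ ≤ ‖T (x a) - x a‖ := by
  have key := @image_le_of_liminf_slope_right_le_deriv_boundary
    (fun t => ‖T (x t) - x t‖) a b
    ((hu.mono (fun t ht => le_trans ha ht.1)).norm)
    (fun _ => ‖T (x a) - x a‖) (fun _ => 0) le_rfl continuousOn_const
    (fun t _ => hasDerivWithinAt_const _ _ _) ?_ b (right_mem_Icc.2 hab)
  · exact key
  intro t ht r hr
  apply Eventually.frequently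
  have ht0 : 0 ≤ t := ha.trans ht.1
  have h1 := (hasDerivAt_iff_isLittleO.1 (hx t ht0)).def (show 0 < r / 4 by linarith)
  have h2 : ∀ᶠ z in 𝓝[>] t, z ∈ Ioo t (t + 1) := Ioo_mem_nhdsGT (by linarith)
  filter_upwards [h2, h1.filter_mono nhdsWithin_le_nhds] with z hz hz1
  have hpos : 0 < z - t := by linarith [hz.1]
  obtain ⟨hl0, hl1⟩ := hlam t ht0
  rw [slope_def_field, div_lt_iff₀ hpos]
  rw [Real.norm_eq_abs, abs_of_pos hpos, hode t ht0, smul_smul] at hz1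
  set u := T (x t) - x t with hu_def
  set e := x z - x t - ((z - t) * lam t) • u with he
  have hm0 : 0 ≤ (z - t) * lam t := by positivity
  have hm1 : (z - t) * lam t ≤ 1 := by nlinarith [hz.2]
  have e1 : T (x z) - x z = (T (x z) - T (x t)) + (1 - (z - t) * lam t) • u - e := by
    rw [he, hu_def]; module
  have e2 : x z - x t = ((z - t) * lam t) • u + e := by rw [he]; module
  have n1 : ‖T (x z) - x z‖ ≤ ‖x z - x t‖ + (1 - (z - t) * lam t) * ‖u‖ + ‖e‖ := by
    rw [e1]
    refine (norm_sub_le _ _).trans ?_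
    refine add_le_add_left ((norm_add_le _ _).trans ?_) _
    rw [norm_smul, Real.norm_eq_abs, abs_of_nonneg (by linarith : 0 ≤ 1 - (z - t) * lam t)]
    exact add_le_add_left (hT _ _) _
  have n2 : ‖x z - x t‖ ≤ ((z - t) * lam t) * ‖u‖ + ‖e‖ := by
    rw [e2]
    refine (norm_add_le _ _).trans ?_
    rw [norm_smul, Real.norm_eq_abs, abs_of_nonneg hm0]
  have : 0 < r * (z - t) := mul_pos hr hpos
  nlinarith

/-- The basic inequality for a fixed point. -/
theorem km_inner_le (T : H → H) (hT : ∀ a b : H, ‖T a - T b‖ ≤ ‖a - b‖)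
    (y : H) (hy : T y = y) (a : H) :
    2 * ⟪a - y, T a - a⟫ ≤ - ‖T a - a‖ ^ 2 := by
  have h := hT a y
  rw [hy] at h
  have e : T a - y = (a - y) + (T a - a) := by abel
  have h2 : ‖T a - y‖ ^ 2 ≤ ‖a - y‖ ^ 2 := by gcongr
  rw [e, norm_add_sq_real] at h2
  linarith

/-- Demiclosedness along a filter. -/
theorem km_demiclosed (T : H → H) (hT : ∀ a b : H, ‖T a - T b‖ ≤ ‖a - b‖)
    {F : Filter ℝ} [F.NeBot] (x : ℝ → H) (p : H) (C : ℝ)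
    (hC : ∀ᶠ t in F, ‖x t - p‖ ≤ C)
    (hu : Tendsto (fun t => T (x t) - x t) F (𝓝 0))
    (hw : ∀ z : H, Tendsto (fun t => ⟪x t - p, z⟫) F (𝓝 0)) : T p = p := by
  have hun : Tendsto (fun t => ‖T (x t) - x t‖) F (𝓝 0) := by simpa using hu.norm
  have hlim : Tendsto (fun t => ‖T (x t) - x t‖ ^ 2 + 2 * ‖T (x t) - x t‖ * C
      - 2 * ⟪x t - p, p - T p⟫) F (𝓝 0) := by
    have := ((hun.pow 2).add ((hun.const_mul 2).mul_const C)).sub ((hw (p - T p)).const_mul 2)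
    simpa using this
  have hle : ‖p - T p‖ ^ 2 ≤ 0 := by
    refine ge_of_tendsto hlim ?_
    filter_upwards [hC] with t ht
    have e : x t - T p = (x t - p) + (p - T p) := by abel
    have h1 : ‖x t - T p‖ ≤ ‖T (x t) - x t‖ + ‖x t - p‖ := by
      have e' : x t - T p = (T (x t) - T p) - (T (x t) - x t) := by abel
      rw [e']
      linarith [norm_sub_le (T (x t) - T p) (T (x t) - x t), hT (x t) p]
    have h2 : ‖x t - T p‖ ^ 2 ≤ (‖T (x t) - x t‖ + ‖x t - p‖) ^ 2 := by gcongr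
    rw [e, norm_add_sq_real] at h2
    have := mul_le_mul_of_nonneg_left ht (norm_nonneg (T (x t) - x t))
    nlinarith
  have h0 : ‖p - T p‖ = 0 := by
    have := norm_nonneg (p - T p)
    nlinarith
  exact (sub_eq_zero.1 (norm_eq_zero.1 h0)).symm

/-- Weak compactness along ultrafilters. -/
theorem km_weak_cluster [CompleteSpace H] (F : Ultrafilter ℝ) (x : ℝ → H) (C : ℝ)
    (hC : ∀ᶠ t in (F : Filter ℝ), ‖x t‖ ≤ C) :
    ∃ p : H, ∀ z : H, Tendsto (fun t => ⟪x t - p, z⟫) (F : Filter ℝ) (𝓝 0) := by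
  have hK := WeakDual.isCompact_closedBall (0 : StrongDual ℝ H) C
  let φ : ℝ → WeakDual ℝ H := fun t =>
    StrongDual.toWeakDual (InnerProductSpace.toDual ℝ H (x t))
  obtain ⟨w, -, hw⟩ := hK.ultrafilter_le_nhds' (F.map φ) (by
    rw [Ultrafilter.mem_map]
    filter_upwards [hC] with t ht
    simp only [φ, Set.mem_preimage]
    simpa using ht)
  have hw' : Tendsto φ F (𝓝 w) := hw
  refine ⟨(InnerProductSpace.toDual ℝ H).symm (WeakDual.toStrongDual w), fun z => ?_⟩
  have h1 : Tendsto (fun t => φ t z) F (𝓝 (w z)) :=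
    ((WeakDual.eval_continuous z).tendsto w).comp hw'
  have h2 := h1.sub_const (w z)
  rw [sub_self] at h2
  refine h2.congr fun t => ?_
  rw [inner_sub_left, InnerProductSpace.toDual_symm_apply]
  rfl

end helpers

/-- Asymptotic behaviour of the continuous Krasnosel'skiĭ–Mann dynamics
`ẋ(t) = λ(t)(T(x(t)) − x(t))`: the trajectory is bounded, `ẋ ∈ L²`,
`T(x(t)) − x(t) → 0`, `ẋ(t) → 0`, and `x(t)` converges weakly to a fixed point
of `T`, provided `∫₀^∞ λ(t)(1−λ(t)) dt = +∞` or `inf λ > 0`. -/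
theorem stmt6
    {H : Type*} [NormedAddCommGroup H] [InnerProductSpace ℝ H] [CompleteSpace H]
    (T : H → H) (hT : ∀ a b : H, ‖T a - T b‖ ≤ ‖a - b‖)
    (hfix : ∃ y : H, T y = y)
    (lam : ℝ → ℝ) (hlam_meas : Measurable lam)
    (hlam : ∀ t ≥ (0:ℝ), lam t ∈ Icc (0:ℝ) 1)
    (hcond : (∫⁻ t in Ici (0:ℝ), ENNReal.ofReal (lam t * (1 - lam t))) = ⊤ ∨
      ∃ ε > (0:ℝ), ∀ t ≥ (0:ℝ), ε ≤ lam t)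
    (x xd : ℝ → H) (x₀ : H) (hx0 : x 0 = x₀)
    (hx : ∀ t ≥ (0:ℝ), HasDerivAt x (xd t) t)
    (hode : ∀ t ≥ (0:ℝ), xd t = lam t • (T (x t) - x t)) :
    (∃ C : ℝ, ∀ t ≥ (0:ℝ), ‖x t‖ ≤ C) ∧
    IntegrableOn (fun t => ‖xd t‖ ^ 2) (Ici 0) ∧
    Tendsto (fun t => T (x t) - x t) atTop (𝓝 0) ∧
    Tendsto xd atTop (𝓝 0) ∧
    ∃ p : H, T p = p ∧ ∀ z : H, Tendsto (fun t => ⟪x t - p, z⟫) atTop (𝓝 0) := by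
  have hTc : Continuous T := by
    have : LipschitzWith 1 T := LipschitzWith.of_dist_le_mul fun a b => by
      simpa [dist_eq_norm] using hT a b
    exact this.continuous
  have hxc : ContinuousOn x (Ici 0) := fun t ht =>
    (hx t ht).continuousAt.continuousWithinAt
  have hu : ContinuousOn (fun t => T (x t) - x t) (Ici 0) :=
    (hTc.comp_continuousOn hxc).sub hxc
  have hmono := km_residual_antitone T hT lam hlam x xd hx hode hu
  have hder : ∀ y : H, ∀ t ≥ (0:ℝ), HasDerivAt (fun s => -‖x s - y‖ ^ 2)
      (-(2 * ⟪x t - y, xd t⟫)) t := fun y t ht =>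
    (((hx t ht).sub_const y).norm_sq).neg
  have hder_ge : ∀ y : H, T y = y → ∀ t ≥ (0:ℝ),
      lam t * ‖T (x t) - x t‖ ^ 2 ≤ -(2 * ⟪x t - y, xd t⟫) := by
    intro y hy t ht
    rw [hode t ht, inner_smul_right]
    have := mul_le_mul_of_nonneg_left (km_inner_le T hT y hy (x t)) (hlam t ht).1
    linarith
  have hder0 : ∀ y : H, T y = y → ∀ t ≥ (0:ℝ), 0 ≤ -(2 * ⟪x t - y, xd t⟫) := by
    intro y hy t ht
    have := hder_ge y hy t ht
    have h2 := mul_nonneg (hlam t ht).1 (sq_nonneg ‖T (x t) - x t‖)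
    linarith
  have hmonoD : ∀ y : H, T y = y → MonotoneOn (fun s => -‖x s - y‖ ^ 2) (Ici 0) := by
    intro y hy
    refine monotoneOn_of_deriv_nonneg (convex_Ici 0)
      (fun t ht => (hder y t ht).continuousAt.continuousWithinAt)
      (fun t ht => (hder y t (interior_subset ht)).differentiableAt.differentiableWithinAt) ?_
    intro t ht
    rw [(hder y t (interior_subset ht)).deriv]
    exact hder0 y hy t (interior_subset ht)
  have hlimD : ∀ y : H, T y = y → ∃ l, Tendsto (fun s => -‖x s - y‖ ^ 2) atTop (𝓝 l) := by
    intro y hy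
    have hm : Monotone (fun s => -‖x (max s 0) - y‖ ^ 2) := fun a b hab =>
      hmonoD y hy (le_max_right a 0) (le_max_right b 0) (max_le_max_right 0 hab)
    have hb : BddAbove (range (fun s => -‖x (max s 0) - y‖ ^ 2)) := by
      refine ⟨0, ?_⟩
      rintro _ ⟨s, rfl⟩
      simp
    refine ⟨_, (tendsto_atTop_ciSup hm hb).congr' ?_⟩
    filter_upwards [eventually_ge_atTop (0:ℝ)] with s hs
    rw [max_eq_left hs]
  obtain ⟨y, hy⟩ := hfix
  have hbd : ∀ t ≥ (0:ℝ), ‖x t‖ ≤ ‖x 0 - y‖ + ‖y‖ := by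
    intro t ht
    have h := hmonoD y hy (mem_Ici.2 le_rfl) (mem_Ici.2 ht) ht
    have h' : ‖x t - y‖ ≤ ‖x 0 - y‖ := by
      refine le_of_sq_le_sq ?_ (norm_nonneg _)
      simpa using h
    have := norm_add_le (x t - y) y
    rw [sub_add_cancel] at this
    linarith
  have hint : IntegrableOn (fun t => -(2 * ⟪x t - y, xd t⟫)) (Ici 0) := by
    obtain ⟨l, hl⟩ := hlimD y hy
    rw [integrableOn_Ici_iff_integrableOn_Ioi]
    exact integrableOn_Ioi_deriv_of_nonneg (hder y 0 le_rfl).continuousAt.continuousWithinAt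
      (fun t ht => hder y t (le_of_lt ht)) (fun t ht => hder0 y hy t (le_of_lt ht)) hl
  have hum : AEStronglyMeasurable (fun t => T (x t) - x t) (volume.restrict (Ici 0)) :=
    hu.aestronglyMeasurable measurableSet_Ici
  have hint2 : IntegrableOn (fun t => lam t * ‖T (x t) - x t‖ ^ 2) (Ici 0) := by
    refine Integrable.mono' hint
      (hlam_meas.aestronglyMeasurable.mul (hum.norm.pow 2)) ?_
    filter_upwards [ae_restrict_mem measurableSet_Ici] with t ht
    rw [Real.norm_of_nonneg (mul_nonneg (hlam t ht).1 (sq_nonneg _))]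
    exact hder_ge y hy t ht
  have hint3 : IntegrableOn (fun t => ‖xd t‖ ^ 2) (Ici 0) := by
    refine Integrable.mono' hint2 ?_ ?_
    · have hm : AEStronglyMeasurable (fun t => ‖lam t • (T (x t) - x t)‖ ^ 2)
          (volume.restrict (Ici 0)) := (hlam_meas.aestronglyMeasurable.smul hum).norm.pow 2
      refine hm.congr ?_
      filter_upwards [ae_restrict_mem measurableSet_Ici] with t ht
      rw [hode t ht]
    · filter_upwards [ae_restrict_mem measurableSet_Ici] with t ht
      obtain ⟨h0, h1⟩ := hlam t ht
      rw [Real.norm_of_nonneg (sq_nonneg _), hode t ht, norm_smul, mul_pow,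
        Real.norm_of_nonneg h0]
      refine mul_le_mul_of_nonneg_right ?_ (sq_nonneg _)
      nlinarith
  have hnint : ¬ IntegrableOn lam (Ici 0) := by
    intro hI
    rcases hcond with h | ⟨ε, hε, h⟩
    · have h1 : (∫⁻ t in Ici (0:ℝ), ENNReal.ofReal (lam t * (1 - lam t))) ≤
          ∫⁻ t in Ici (0:ℝ), ENNReal.ofReal (lam t) := by
        refine setLIntegral_mono' measurableSet_Ici fun t ht => ENNReal.ofReal_le_ofReal ?_
        obtain ⟨h0, h1⟩ := hlam t ht
        nlinarith
      rw [h, top_le_iff] at h1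
      exact hI.lintegral_lt_top.ne h1
    · have hc : IntegrableOn (fun _ : ℝ => ε) (Ici (0:ℝ)) := by
        refine Integrable.mono' hI aestronglyMeasurable_const ?_
        filter_upwards [ae_restrict_mem measurableSet_Ici] with t ht
        rw [Real.norm_of_nonneg hε.le]
        exact h t ht
      rw [integrableOn_const_iff] at hc
      rcases hc with hc | hc
      · exact hε.ne' (by simpa using hc)
      · simp at hc
  have hun : Tendsto (fun t => ‖T (x t) - x t‖) atTop (𝓝 0) := by
    have hex : ∀ c > (0:ℝ), ∃ s ≥ (0:ℝ), ‖T (x s) - x s‖ < c := by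
      intro c hc
      by_contra! hcon
      apply hnint
      refine Integrable.mono' (hint2.const_mul (c ^ 2)⁻¹) hlam_meas.aestronglyMeasurable ?_
      filter_upwards [ae_restrict_mem measurableSet_Ici] with t ht
      have h0 := (hlam t ht).1
      rw [Real.norm_of_nonneg h0, inv_mul_eq_div, le_div_iff₀ (by positivity)]
      have := hcon t ht
      gcongr
    rw [Metric.tendsto_atTop]
    intro c hc
    obtain ⟨s, hs, hsc⟩ := hex c hc
    refine ⟨s, fun t ht => ?_⟩
    rw [Real.dist_eq, sub_zero, abs_of_nonneg (norm_nonneg _)]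
    exact (hmono s t hs ht).trans_lt hsc
  have hu0 : Tendsto (fun t => T (x t) - x t) atTop (𝓝 0) :=
    tendsto_zero_iff_norm_tendsto_zero.2 hun
  have hxd0 : Tendsto xd atTop (𝓝 0) := by
    refine squeeze_zero_norm' ?_ hun
    filter_upwards [eventually_ge_atTop (0:ℝ)] with t ht
    obtain ⟨h0, h1⟩ := hlam t ht
    rw [hode t ht, norm_smul, Real.norm_of_nonneg h0]
    exact mul_le_of_le_one_left (norm_nonneg _) h1
  refine ⟨⟨_, hbd⟩, hint3, hu0, hxd0, ?_⟩
  have hcl : ∀ F : Ultrafilter ℝ, (F : Filter ℝ) ≤ atTop →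
      ∃ p : H, T p = p ∧ ∀ z : H, Tendsto (fun t => ⟪x t - p, z⟫) (F : Filter ℝ) (𝓝 0) := by
    intro F hF
    have hev : ∀ᶠ t in (F : Filter ℝ), ‖x t‖ ≤ ‖x 0 - y‖ + ‖y‖ :=
      hF ((eventually_ge_atTop (0:ℝ)).mono hbd)
    obtain ⟨p, hp⟩ := km_weak_cluster F x _ hev
    refine ⟨p, km_demiclosed T hT x p (‖x 0 - y‖ + ‖y‖ + ‖p‖) ?_ (hu0.mono_left hF) hp, hp⟩
    filter_upwards [hev] with t ht
    linarith [norm_sub_le (x t) p]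
  obtain ⟨F₀, hF₀⟩ := Filter.exists_ultrafilter_le (atTop : Filter ℝ)
  obtain ⟨p, hp, hpw⟩ := hcl F₀ hF₀
  refine ⟨p, hp, fun z => ?_⟩
  rw [tendsto_iff_ultrafilter]
  intro G hG
  obtain ⟨q, hq, hqw⟩ := hcl G hG
  have hpq : p = q := by
    obtain ⟨l, hl⟩ := hlimD p hp
    obtain ⟨m, hm⟩ := hlimD q hq
    have hid : ∀ t, -‖x t - p‖ ^ 2 - -‖x t - q‖ ^ 2
        = 2 * ⟪x t - p, p - q⟫ + ‖p - q‖ ^ 2 := by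
      intro t
      have e : x t - q = (x t - p) + (p - q) := by abel
      rw [e, norm_add_sq_real]
      ring
    have hid' : ∀ t, -‖x t - p‖ ^ 2 - -‖x t - q‖ ^ 2
        = 2 * ⟪x t - q, p - q⟫ - ‖p - q‖ ^ 2 := by
      intro t
      have e : x t - p = (x t - q) - (p - q) := by abel
      rw [e, norm_sub_sq_real]
      ring
    have hlm := hl.sub hm
    have h1 : l - m = 2 * 0 + ‖p - q‖ ^ 2 := by
      refine tendsto_nhds_unique (hlm.mono_left hF₀) ?_
      exact (((hpw (p - q)).const_mul 2).add_const _).congr fun t => (hid t).symm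
    have h2 : l - m = 2 * 0 - ‖p - q‖ ^ 2 := by
      refine tendsto_nhds_unique (hlm.mono_left hG) ?_
      exact (((hqw (p - q)).const_mul 2).sub_const _).congr fun t => (hid' t).symm
    have h3 : ‖p - q‖ ^ 2 = 0 := by linarith
    exact sub_eq_zero.1 (norm_eq_zero.1 (pow_eq_zero_iff (two_ne_zero)|>.1 h3))
  rw [hpq]
  exact hqw z
end

section
/- Let B : H → H be a β-cocoercive operator (β > 0) with zer B ≠ ∅, and let γ, λ : [0,∞) → (0,∞) be locally absolutely continuous with γ̇(t) ≤ 0 ≤ λ̇(t) and γ²(t)/λ(t) ≥ (1+θ)/β for almost every t, for some θ > 0. Let x : [0,∞) → H be the unique C² global solution of ẍ(t) + γ(t)ẋ(t) + λ(t)B(x(t)) = 0 with x(0) = u₀, ẋ(0) = v₀. Then x is bounded, ẋ, ẍ, B∘x ∈ L²([0,∞); H), ẋ(t) → 0, ẍ(t) → 0, B(x(t)) → 0 as t → ∞, and x(t) converges weakly to a zero of B. -/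
open Filter MeasureTheory Set Topology
open scoped RealInnerProductSpace

lemma ac_aux (f f' : ℝ → ℝ) (M : ℝ)
    (hd : ∀ᵐ t ∂(volume.restrict (Ici (0:ℝ))), HasDerivAt f (f' t) t)
    (hfund : ∀ t ≥ (0:ℝ), f t = f 0 + ∫ s in (0:ℝ)..t, f' s)
    (hnn : ∀ᵐ t ∂(volume.restrict (Ici (0:ℝ))), 0 ≤ f' t)
    (hbd : ∀ᵐ t ∂(volume.restrict (Ici (0:ℝ))), f t ≤ M) :
    MonotoneOn f (Ici 0) ∧ ContinuousOn f (Ici 0) := by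
  have hsub : ∀ t : ℝ, Ioc 0 t ⊆ Ici (0:ℝ) := fun t s hs => hs.1.le
  have hnn' : ∀ t, 0 ≤ᵐ[volume.restrict (Ioc 0 t)] f' := fun t =>
    ae_restrict_of_ae_restrict_of_subset (hsub t) hnn
  have key : ∀ T, 0 ≤ T → IntegrableOn f' (Ioc 0 T) := by
    by_contra hcon
    push Not at hcon
    obtain ⟨T, hT0, hT⟩ := hcon
    set S : Set ℝ := {t | 0 ≤ t ∧ ¬ IntegrableOn f' (Ioc 0 t)} with hS
    have hSb : BddBelow S := ⟨0, fun t ht => ht.1⟩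
    have hSn : S.Nonempty := ⟨T, hT0, hT⟩
    set τ := sInf S with hτ
    have hτ0 : 0 ≤ τ := le_csInf hSn (fun t ht => ht.1)
    have ha : ∀ t, τ < t → f t = f 0 := by
      intro t ht
      obtain ⟨s, hs, hst⟩ := exists_lt_of_csInf_lt hSn ht
      have hnot : ¬ IntegrableOn f' (Ioc 0 t) := fun h =>
        hs.2 (h.mono_set (Ioc_subset_Ioc_right hst.le))
      have ht0 : 0 ≤ t := hτ0.trans ht.le
      rw [hfund t ht0, intervalIntegral.integral_of_le ht0, integral_undef hnot, add_zero]
    have hI1 : IntegrableOn f' (Ioi τ) := by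
      have h1 : ∀ᵐ t ∂(volume.restrict (Ioi τ)), HasDerivAt f (f' t) t :=
        ae_restrict_of_ae_restrict_of_subset (fun t ht => hτ0.trans (le_of_lt ht)) hd
      have h2 : (fun _ => (0:ℝ)) =ᵐ[volume.restrict (Ioi τ)] f' := by
        filter_upwards [h1, ae_restrict_mem measurableSet_Ioi] with t ht htτ
        have : HasDerivAt f 0 t := by
          refine (hasDerivAt_const t (f 0)).congr_of_eventuallyEq ?_
          filter_upwards [Ioi_mem_nhds htτ] with s hs using ha s hs
        exact this.unique ht
      exact (integrable_zero _ _ _).congr h2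
    have hb : ∀ t, t < τ → IntegrableOn f' (Ioc 0 t) := by
      intro t ht
      by_cases h0 : 0 ≤ t
      · by_contra hne
        exact notMem_of_lt_csInf ht hSb ⟨h0, hne⟩
      · rw [Ioc_eq_empty (by linarith)]; exact integrableOn_empty
    have hI2 : IntegrableOn f' (Ioc 0 τ) := by
      have hseq : Tendsto (fun n : ℕ => τ - 1 / ((n:ℝ) + 1)) atTop (𝓝 τ) := by
        simpa using tendsto_const_nhds.sub (tendsto_one_div_add_atTop_nhds_zero_nat (𝕜 := ℝ))
      have hlt : ∀ n : ℕ, τ - 1 / ((n:ℝ) + 1) < τ := fun n => by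
        have : 0 < 1 / ((n:ℝ) + 1) := by positivity
        linarith
      refine integrableOn_Ioc_of_intervalIntegral_norm_bounded_right (I := |M - f 0|)
        (fun n => hb _ (hlt n)) hseq (Eventually.of_forall fun n => ?_)
      have hbτ := hlt n
      generalize τ - 1 / ((n:ℝ) + 1) = b at hbτ ⊢
      by_cases h0 : 0 ≤ b
      · obtain ⟨s, hs, hsM⟩ : ∃ s ∈ Ioo b τ, f s ≤ M := by
          have h1 : ∀ᵐ t ∂(volume.restrict (Ioo b τ)), f t ≤ M :=
            ae_restrict_of_ae_restrict_of_subset (fun t ht => h0.trans (le_of_lt ht.1)) hbd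
          have : (ae (volume.restrict (Ioo b τ))).NeBot := by
            rw [ae_neBot, Ne, Measure.restrict_eq_zero]
            simp [hbτ]
          obtain ⟨s, h⟩ := (h1.and (ae_restrict_mem measurableSet_Ioo)).exists
          exact ⟨s, h.2, h.1⟩
        have e1 : ∫ t in Ioc 0 b, ‖f' t‖ = ∫ t in Ioc 0 b, f' t := by
          apply integral_congr_ae
          filter_upwards [hnn' b] with t ht
          exact Real.norm_of_nonneg ht
        have e2 : ∫ t in Ioc 0 b, f' t ≤ ∫ t in Ioc 0 s, f' t :=
          setIntegral_mono_set (hb s hs.2) (hnn' s) (Ioc_subset_Ioc_right hs.1.le).eventuallyLE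
        have e3 := hfund s (h0.trans hs.1.le)
        rw [intervalIntegral.integral_of_le (h0.trans hs.1.le)] at e3
        rw [e1]
        refine le_trans ?_ (le_abs_self _)
        linarith
      · rw [Ioc_eq_empty (by linarith)]; simp
    refine hT ((hI2.union hI1).mono_set ?_)
    intro t ht
    by_cases h : t ≤ τ
    · exact Or.inl ⟨ht.1, h⟩
    · exact Or.inr (not_le.1 h)
  constructor
  · intro s hs t ht hst
    have e1 := hfund s hs
    have e2 := hfund t ht
    rw [intervalIntegral.integral_of_le hs] at e1
    rw [intervalIntegral.integral_of_le ht] at e2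
    have := setIntegral_mono_set (key t ht) (hnn' t) (Ioc_subset_Ioc_right hst).eventuallyLE
    linarith
  · intro t ht
    have ht0 : (0:ℝ) ≤ t := ht
    have h1 : IntegrableOn f' (Icc 0 (t+1)) := by
      rw [integrableOn_Icc_iff_integrableOn_Ioc]; exact key _ (by linarith)
    have h2 : ContinuousOn f (Icc 0 (t+1)) := by
      have := (intervalIntegral.continuousOn_primitive_interval (a := 0) (b := t+1)
        (by rwa [uIcc_of_le (by linarith)])).const_add (f 0)
      rw [uIcc_of_le (by linarith)] at this
      exact this.congr fun s hs => hfund s hs.1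
    refine (h2 t ⟨ht0, by linarith⟩).mono_of_mem_nhdsWithin ?_
    rw [mem_nhdsWithin]
    exact ⟨Iio (t+1), isOpen_Iio, by simp, fun s hs => ⟨hs.2, le_of_lt hs.1⟩⟩

lemma dini_aux (a h g c1 c2 : ℝ → ℝ) (s a' h' g' : ℝ) (hs : 0 ≤ s)
    (ha : HasDerivAt a a' s) (hh : HasDerivAt h h' s) (hg : HasDerivAt g g' s)
    (hc1 : AntitoneOn c1 (Ici 0)) (hc2 : AntitoneOn c2 (Ici 0))
    (hk1 : ContinuousOn c1 (Ici 0)) (hk2 : ContinuousOn c2 (Ici 0))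
    (hh0 : 0 ≤ h s) (hg0 : 0 ≤ g s) (r : ℝ) (hr : a' + c1 s * h' + c2 s * g' < r) :
    ∀ᶠ z in 𝓝[>] s, slope (fun t => a t + c1 t * h t + c2 t * g t) s z < r := by
  have sub : 𝓝[>] s ≤ 𝓝[≠] s := nhdsWithin_mono _ (fun z hz => ne_of_gt hz)
  have t1 := (hasDerivAt_iff_tendsto_slope.1 ha).mono_left sub
  have t2 := (hasDerivAt_iff_tendsto_slope.1 hh).mono_left sub
  have t3 := (hasDerivAt_iff_tendsto_slope.1 hg).mono_left sub
  have sub2 : 𝓝[>] s ≤ 𝓝[Ici 0] s := nhdsWithin_mono _ (fun z hz => hs.trans (le_of_lt hz))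
  have t4 : Tendsto c1 (𝓝[>] s) (𝓝 (c1 s)) := (hk1 s hs).mono_left sub2
  have t5 : Tendsto c2 (𝓝[>] s) (𝓝 (c2 s)) := (hk2 s hs).mono_left sub2
  have := ((t1.add (t4.mul t2)).add (t5.mul t3)).eventually (gt_mem_nhds hr)
  filter_upwards [this, self_mem_nhdsWithin] with z hz hsz
  refine lt_of_le_of_lt ?_ hz
  have hsz' : 0 < z - s := sub_pos.2 hsz
  have m1 := hc1 (show s ∈ Ici 0 from hs) (show z ∈ Ici 0 from hs.trans (le_of_lt hsz)) (le_of_lt hsz)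
  have m2 := hc2 (show s ∈ Ici 0 from hs) (show z ∈ Ici 0 from hs.trans (le_of_lt hsz)) (le_of_lt hsz)
  simp only [slope_def_field]
  have : (a z - a s) / (z - s) + c1 z * ((h z - h s) / (z - s)) + c2 z * ((g z - g s) / (z - s))
      = ((a z - a s) + c1 z * (h z - h s) + c2 z * (g z - g s)) / (z - s) := by ring
  rw [this]
  gcongr
  nlinarith

lemma barb_aux {H : Type*} [NormedAddCommGroup H] (f : ℝ → H) (L : ℝ) (hL : 0 < L)
    (hlip : ∀ s ≥ (0:ℝ), ∀ t ≥ (0:ℝ), ‖f s - f t‖ ≤ L * |s - t|)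
    (hfint : IntegrableOn (fun t => ‖f t‖ ^ 2) (Ici 0)) : Tendsto f atTop (𝓝 0) := by
  rw [Metric.tendsto_nhds]
  intro ε hε
  set δ := ε / (2 * L) with hδ
  have hδ0 : 0 < δ := by positivity
  have hfint' : IntegrableOn (fun t => ‖f t‖ ^ 2) (Ioi 0) := hfint.mono_set Ioi_subset_Ici_self
  have l1 := intervalIntegral_tendsto_integral_Ioi 0 hfint' tendsto_id
  have l2 := intervalIntegral_tendsto_integral_Ioi 0 hfint' (tendsto_atTop_add_const_right atTop δ tendsto_id)
  have l3 := l2.sub l1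
  rw [sub_self] at l3
  have hpos : 0 < δ * (ε / 2) ^ 2 := by positivity
  filter_upwards [l3.eventually (gt_mem_nhds hpos), eventually_ge_atTop 0] with t ht ht0
  rw [dist_zero_right]
  by_contra hcon
  push Not at hcon
  have ii : ∀ a b : ℝ, 0 ≤ a → 0 ≤ b → IntervalIntegrable (fun t => ‖f t‖ ^ 2) volume a b := by
    intro a b h1 h2
    rw [intervalIntegrable_iff]
    exact hfint.mono_set (fun s hs => (le_min h1 h2).trans hs.1.le)
  simp only [id] at ht
  rw [intervalIntegral.integral_interval_sub_left (ii _ _ le_rfl (by positivity)) (ii _ _ le_rfl ht0)] at ht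
  have : ∫ s in t..(t+δ), (ε/2)^2 ≤ ∫ s in t..(t+δ), ‖f s‖^2 := by
    apply intervalIntegral.integral_mono_on (by linarith) (by simp) (ii _ _ ht0 (by positivity))
    intro s hs
    have h1 := hlip t ht0 s (ht0.trans hs.1)
    have h2 : |t - s| ≤ δ := by rw [abs_le]; constructor <;> linarith [hs.1, hs.2]
    have h3 : L * |t - s| ≤ ε / 2 := by
      calc L * |t - s| ≤ L * δ := by gcongr
        _ = ε / 2 := by rw [hδ]; field_simp
    have h4 : ‖f t‖ ≤ ‖f t - f s‖ + ‖f s‖ := by simpa using norm_add_le (f t - f s) (f s)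
    gcongr
    linarith
  simp at this
  linarith

lemma opial_aux {H : Type*} [NormedAddCommGroup H] [InnerProductSpace ℝ H] [CompleteSpace H]
    (β : ℝ) (hβ : 0 < β) (B : H → H)
    (hB : ∀ a c : H, β * ‖B a - B c‖ ^ 2 ≤ ⟪a - c, B a - B c⟫)
    (x : ℝ → H) (C : ℝ) (hC : ∀ t ≥ (0:ℝ), ‖x t‖ ≤ C)
    (hBx : Tendsto (fun t => B (x t)) atTop (𝓝 0))
    (hlim : ∀ u, B u = 0 → ∃ l : ℝ, Tendsto (fun t => ‖x t - u‖ ^ 2) atTop (𝓝 l)) :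
    ∃ p : H, B p = 0 ∧ ∀ z : H, Tendsto (fun t => ⟪x t - p, z⟫) atTop (𝓝 0) := by
  have hU : ∀ U : Ultrafilter ℝ, (U : Filter ℝ) ≤ atTop →
      ∃ p : H, B p = 0 ∧ ∀ z : H, Tendsto (fun t => ⟪x t, z⟫) U (𝓝 ⟪p, z⟫) := by
    intro U hU
    have hcomp := WeakDual.isCompact_closedBall (𝕜 := ℝ) (E := H) 0 C
    rw [isCompact_iff_ultrafilter_le_nhds] at hcomp
    obtain ⟨q, -, hq⟩ := hcomp (U.map fun t => StrongDual.toWeakDual (InnerProductSpace.toDual ℝ H (x t))) (by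
      rw [le_principal_iff]
      have : ∀ᶠ t in (U : Filter ℝ), 0 ≤ t := hU (eventually_ge_atTop 0)
      refine Filter.mem_map.2 ?_
      filter_upwards [this] with t ht
      simp only [mem_preimage, Metric.mem_closedBall, dist_zero_right]
      refine le_trans (le_of_eq ?_) (hC t ht)
      exact (InnerProductSpace.toDual ℝ H).norm_map (x t))
    set p := (InnerProductSpace.toDual ℝ H).symm (WeakDual.toStrongDual q) with hp
    have hz : ∀ z : H, Tendsto (fun t => ⟪x t, z⟫) U (𝓝 ⟪p, z⟫) := by
      intro z
      have h1 : Tendsto (fun t => StrongDual.toWeakDual (InnerProductSpace.toDual ℝ H (x t))) U (𝓝 q) := hq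
      have h2 := ((WeakDual.eval_continuous z).tendsto q).comp h1
      have h3 : ⟪p, z⟫ = q z := by
        rw [hp, InnerProductSpace.toDual_symm_apply]; rfl
      rw [h3]
      exact h2
    refine ⟨p, ?_, hz⟩
    have hBU : Tendsto (fun t => B (x t)) U (𝓝 0) := hBx.mono_left hU
    have L1 : Tendsto (fun t => β * ‖B (x t) - B p‖ ^ 2) U (𝓝 (β * ‖0 - B p‖ ^ 2)) :=
      (((hBU.sub_const (B p)).norm).pow 2).const_mul β
    have L2 : Tendsto (fun t => ⟪x t - p, B (x t)⟫) U (𝓝 0) := by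
      have b : Tendsto (fun t => (C + ‖p‖) * ‖B (x t)‖) U (𝓝 ((C + ‖p‖) * ‖(0:H)‖)) :=
        hBU.norm.const_mul _
      rw [norm_zero, mul_zero] at b
      refine squeeze_zero_norm' ?_ b
      have : ∀ᶠ t in (U : Filter ℝ), 0 ≤ t := hU (eventually_ge_atTop 0)
      filter_upwards [this] with t ht
      refine (norm_inner_le_norm _ _).trans ?_
      gcongr
      exact (norm_sub_le _ _).trans (by gcongr; exact hC t ht)
    have L3 : Tendsto (fun t => ⟪x t - p, B p⟫) U (𝓝 0) := by
      have := (hz (B p)).sub_const ⟪p, B p⟫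
      simpa [inner_sub_left] using this
    have L4 : Tendsto (fun t => ⟪x t - p, B (x t) - B p⟫) U (𝓝 0) := by
      have := L2.sub L3
      simpa [inner_sub_right] using this
    have := le_of_tendsto_of_tendsto' L1 L4 (fun t => hB _ _)
    have h5 : ‖B p‖ ^ 2 ≤ 0 := by
      simp only [zero_sub, norm_neg] at this
      by_contra h; push Not at h
      have := mul_pos hβ h
      linarith
    have : ‖B p‖ = 0 := by nlinarith [norm_nonneg (B p)]
    exact norm_eq_zero.1 this
  obtain ⟨p, hp0, hp⟩ := hU (Ultrafilter.of atTop) (Ultrafilter.of_le _)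
  refine ⟨p, hp0, fun z => ?_⟩
  rw [tendsto_iff_ultrafilter]
  intro V hV
  obtain ⟨q, hq0, hq⟩ := hU V hV
  have hpq : p = q := by
    obtain ⟨l1, hl1⟩ := hlim p hp0
    obtain ⟨l2, hl2⟩ := hlim q hq0
    have e : ∀ t, ‖x t - p‖ ^ 2 - ‖x t - q‖ ^ 2 - ‖p‖ ^ 2 + ‖q‖ ^ 2 = -2 * ⟪x t, p - q⟫ := by
      intro t
      rw [norm_sub_sq_real, norm_sub_sq_real, inner_sub_right]; ring
    have hl := ((hl1.sub hl2).sub_const (‖p‖ ^ 2)).add_const (‖q‖ ^ 2)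
    simp only [e] at hl
    have u1 := tendsto_nhds_unique (hl.mono_left (Ultrafilter.of_le _)) ((hp (p - q)).const_mul (-2))
    have u2 := tendsto_nhds_unique (hl.mono_left hV) ((hq (p - q)).const_mul (-2))
    have : ⟪p - q, p - q⟫ = 0 := by rw [inner_sub_left]; linarith
    exact sub_eq_zero.1 (inner_self_eq_zero.1 this)
  subst hpq
  have := (hq z).sub_const ⟪p, z⟫
  change Tendsto _ _ _
  simpa [inner_sub_left] using this

lemma energy_aux {H : Type*} [NormedAddCommGroup H] [InnerProductSpace ℝ H]
    (β : ℝ) (hβ : 0 < β) (B : H → H)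
    (hB : ∀ a c : H, β * ‖B a - B c‖ ^ 2 ≤ ⟪a - c, B a - B c⟫)
    (u : H) (hu : B u = 0) (γ lam : ℝ → ℝ) (Λ θ : ℝ)
    (hγpos : ∀ t ≥ (0:ℝ), 0 < γ t) (hlampos : ∀ t ≥ (0:ℝ), 0 < lam t)
    (hγm : AntitoneOn γ (Ici 0)) (hγc : ContinuousOn γ (Ici 0))
    (hlm : MonotoneOn lam (Ici 0)) (hlc : ContinuousOn lam (Ici 0))
    (hΛ : ∀ t ≥ (0:ℝ), lam t ≤ Λ)
    (hA : ∀ t ≥ (0:ℝ), (1 + θ) / β ≤ γ t ^ 2 / lam t)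
    (x xd xdd : ℝ → H)
    (hx : ∀ t : ℝ, HasDerivAt x (xd t) t)
    (hxd : ∀ t : ℝ, HasDerivAt xd (xdd t) t)
    (hxddcont : Continuous xdd)
    (hode : ∀ t ≥ (0:ℝ), xdd t + γ t • xd t + lam t • B (x t) = 0)
    (s t : ℝ) (hs : 0 ≤ s) (hst : s ≤ t) :
    (⟪x t - u, xd t⟫ + γ t * (1 / 2 * ‖x t - u‖ ^ 2) + β * (γ t / lam t) * ‖xd t‖ ^ 2) ≤
    (⟪x s - u, xd s⟫ + γ s * (1 / 2 * ‖x s - u‖ ^ 2) + β * (γ s / lam s) * ‖xd s‖ ^ 2)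
      - ∫ r in s..t, (θ * ‖xd r‖ ^ 2 + β / Λ * ‖xdd r‖ ^ 2) := by
  have hxc : Continuous x := continuous_iff_continuousAt.2 fun t => (hx t).continuousAt
  have hxdc : Continuous xd := continuous_iff_continuousAt.2 fun t => (hxd t).continuousAt
  have hw : Continuous (fun r => θ * ‖xd r‖ ^ 2 + β / Λ * ‖xdd r‖ ^ 2) := by fun_prop
  have hsub : Icc s t ⊆ Ici 0 := fun r hr => hs.trans hr.1
  have hc2 : ContinuousOn (fun t => β * (γ t / lam t)) (Ici 0) :=
    continuousOn_const.mul (hγc.div hlc (fun r hr => (hlampos r hr).ne'))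
  have hm2 : AntitoneOn (fun t => β * (γ t / lam t)) (Ici 0) := by
    intro a ha b hb hab
    have h1 := hγm ha hb hab
    have h2 := hlm ha hb hab
    have h3 := hlampos a ha
    have h4 := hγpos a ha
    dsimp only
    gcongr
  have hPd : ∀ r, HasDerivAt (fun τ => (⟪x s - u, xd s⟫ + γ s * (1 / 2 * ‖x s - u‖ ^ 2) + β * (γ s / lam s) * ‖xd s‖ ^ 2)
      - ∫ q in s..τ, (θ * ‖xd q‖ ^ 2 + β / Λ * ‖xdd q‖ ^ 2))
      (-(θ * ‖xd r‖ ^ 2 + β / Λ * ‖xdd r‖ ^ 2)) r := by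
    intro r
    exact (hw.integral_hasStrictDerivAt s r).hasDerivAt.const_sub _
  refine image_le_of_liminf_slope_right_le_deriv_boundary (a := s) (b := t)
    (f := fun t => ⟪x t - u, xd t⟫ + γ t * (1 / 2 * ‖x t - u‖ ^ 2) + β * (γ t / lam t) * ‖xd t‖ ^ 2)
    (B := fun τ => (⟪x s - u, xd s⟫ + γ s * (1 / 2 * ‖x s - u‖ ^ 2) + β * (γ s / lam s) * ‖xd s‖ ^ 2)
      - ∫ q in s..τ, (θ * ‖xd q‖ ^ 2 + β / Λ * ‖xdd q‖ ^ 2))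
    (B' := fun r => -(θ * ‖xd r‖ ^ 2 + β / Λ * ‖xdd r‖ ^ 2))
    ?_ (by simp) (fun r _ => (hPd r).continuousAt.continuousWithinAt)
    (fun r _ => (hPd r).hasDerivWithinAt) ?_ ⟨hst, le_rfl⟩
  · refine ContinuousOn.add (ContinuousOn.add ?_ ((hγc.mono hsub).mul ?_)) ((hc2.mono hsub).mul ?_)
    · exact Continuous.continuousOn (by fun_prop)
    · exact Continuous.continuousOn (by fun_prop)
    · exact Continuous.continuousOn (by fun_prop)
  · intro r hr q hq
    have hr0 : 0 ≤ r := hs.trans hr.1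
    have hxu : HasDerivAt (fun t => x t - u) (xd r) r := (hx r).sub_const u
    have d1 := hxu.inner ℝ (hxd r)
    have d2 := (hxu.norm_sq).const_mul (1 / 2 : ℝ)
    have d3 := (hxd r).norm_sq
    refine (dini_aux _ _ _ γ (fun t => β * (γ t / lam t)) r _ _ _ hr0 d1 d2 d3 hγm hm2 hγc hc2
      (by positivity) (by positivity) q (lt_of_le_of_lt ?_ hq)).frequently
    have hl := hlampos r hr0
    have hg := hγpos r hr0
    have o1 : xdd r = -(γ r • xd r) - lam r • B (x r) := by
      have := hode r hr0
      rw [← sub_eq_zero, ← this]; abel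
    have o2 : lam r • B (x r) = -(xdd r + γ r • xd r) := by rw [o1]; abel
    have i1 : ⟪x r - u, xdd r⟫ = - (γ r * ⟪x r - u, xd r⟫) - lam r * ⟪x r - u, B (x r)⟫ := by
      rw [o1, inner_sub_right, inner_neg_right, real_inner_smul_right, real_inner_smul_right]
    have i2 : lam r ^ 2 * ‖B (x r)‖ ^ 2 = ‖xdd r‖ ^ 2 + 2 * γ r * ⟪xd r, xdd r⟫ + γ r ^ 2 * ‖xd r‖ ^ 2 := by
      have h1 : ‖lam r • B (x r)‖ ^ 2 = ‖xdd r + γ r • xd r‖ ^ 2 := by rw [o2, norm_neg]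
      rw [norm_smul, mul_pow, Real.norm_eq_abs, sq_abs, norm_add_sq_real, norm_smul, mul_pow,
        Real.norm_eq_abs, sq_abs, real_inner_smul_right, real_inner_comm] at h1
      linarith
    have i3 := hB (x r) u
    rw [hu, sub_zero] at i3
    have i4 : lam r * (β * ‖B (x r)‖ ^ 2) =
        β / lam r * ‖xdd r‖ ^ 2 + 2 * (β * (γ r / lam r)) * ⟪xd r, xdd r⟫ + β * (γ r ^ 2 / lam r) * ‖xd r‖ ^ 2 := by
      have : lam r * (β * ‖B (x r)‖ ^ 2) = β / lam r * (lam r ^ 2 * ‖B (x r)‖ ^ 2) := by field_simp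
      rw [this, i2]; field_simp
    have i5 : lam r * (β * ‖B (x r)‖ ^ 2) ≤ lam r * ⟪x r - u, B (x r)⟫ := by gcongr
    have i6 : β / Λ * ‖xdd r‖ ^ 2 ≤ β / lam r * ‖xdd r‖ ^ 2 := by
      have := hΛ r hr0
      gcongr
    have i7 : (1 + θ) * ‖xd r‖ ^ 2 ≤ β * (γ r ^ 2 / lam r) * ‖xd r‖ ^ 2 := by
      have := hA r hr0
      rw [div_le_iff₀' hβ] at this
      gcongr
    have i8 : ⟪xd r, xd r⟫ = ‖xd r‖ ^ 2 := real_inner_self_eq_norm_sq _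
    rw [i1, i8]
    linarith

lemma bdd_aux (h h' : ℝ → ℝ) (hh : ∀ t, HasDerivAt h (h' t) t) (c M : ℝ) (hc : 0 < c)
    (hb : ∀ t ≥ (0:ℝ), h' t + c * h t ≤ M) :
    ∃ K, ∀ t ≥ (0:ℝ), h t ≤ K := by
  refine ⟨max (h 0) (M / c) + 1, fun t ht => ?_⟩
  refine image_le_of_deriv_right_lt_deriv_boundary (a := 0) (b := t) (f := h) (f' := h')
    (B := fun _ => max (h 0) (M / c) + 1) (B' := fun _ => 0)
    (fun r _ => (hh r).continuousAt.continuousWithinAt) (fun r _ => (hh r).hasDerivWithinAt)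
    (by linarith [le_max_left (h 0) (M / c)]) (fun r => hasDerivAt_const _ _) ?_ ⟨ht, le_rfl⟩
  intro r hr he
  have h1 := hb r hr.1
  have h2 : M / c < h r := by rw [he]; linarith [le_max_right (h 0) (M / c)]
  rw [div_lt_iff₀' hc] at h2
  linarith

lemma lim_aux (F : ℝ → ℝ) (m : ℝ) (hF : AntitoneOn F (Ici 0)) (hm : ∀ t ≥ (0:ℝ), m ≤ F t) :
    ∃ l, m ≤ l ∧ Tendsto F atTop (𝓝 l) := by
  have h1 : Antitone (fun t => F (max t 0)) := fun a b hab =>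
    hF (le_max_right a 0) (le_max_right b 0) (max_le_max_right 0 hab)
  have h2 : BddBelow (range fun t => F (max t 0)) :=
    ⟨m, by rintro _ ⟨t, rfl⟩; exact hm _ (le_max_right t 0)⟩
  refine ⟨_, le_ciInf fun t => hm _ (le_max_right t 0), (tendsto_atTop_ciInf h1 h2).congr' ?_⟩
  filter_upwards [eventually_ge_atTop 0] with t ht
  rw [max_eq_left ht]

/-- Asymptotic behaviour of the second order dynamics
`ẍ(t) + γ(t)ẋ(t) + λ(t)B(x(t)) = 0` governed by a `β`-cocoercive operator `B`
with `zer B ≠ ∅`, under the conditions `γ̇ ≤ 0 ≤ λ̇` and `γ²/λ ≥ (1+θ)/β` a.e.: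
the trajectory is bounded, `ẋ, ẍ, B∘x ∈ L²`, all of `ẋ(t), ẍ(t), B(x(t))` tend
to `0`, and `x(t)` converges weakly to a zero of `B`. -/
theorem stmt9
    {H : Type*} [NormedAddCommGroup H] [InnerProductSpace ℝ H] [CompleteSpace H]
    (β : ℝ) (hβ : 0 < β) (B : H → H)
    (hB : ∀ a c : H, β * ‖B a - B c‖ ^ 2 ≤ ⟪a - c, B a - B c⟫)
    (hzer : ∃ u : H, B u = 0)
    (γ lam γ' lam' : ℝ → ℝ)
    (hγpos : ∀ t ≥ (0:ℝ), 0 < γ t) (hlampos : ∀ t ≥ (0:ℝ), 0 < lam t)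
    (hγd : ∀ᵐ t ∂(volume.restrict (Ici (0:ℝ))), HasDerivAt γ (γ' t) t)
    (hlamd : ∀ᵐ t ∂(volume.restrict (Ici (0:ℝ))), HasDerivAt lam (lam' t) t)
    (hγfund : ∀ t ≥ (0:ℝ), γ t = γ 0 + ∫ s in (0:ℝ)..t, γ' s)
    (hlamfund : ∀ t ≥ (0:ℝ), lam t = lam 0 + ∫ s in (0:ℝ)..t, lam' s)
    (θ : ℝ) (hθ : 0 < θ)
    (hA1 : ∀ᵐ t ∂(volume.restrict (Ici (0:ℝ))),
      γ' t ≤ 0 ∧ 0 ≤ lam' t ∧ (1 + θ) / β ≤ γ t ^ 2 / lam t)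
    (x xd xdd : ℝ → H) (u₀ v₀ : H) (hx0 : x 0 = u₀) (hxd0 : xd 0 = v₀)
    (hx : ∀ t : ℝ, HasDerivAt x (xd t) t)
    (hxd : ∀ t : ℝ, HasDerivAt xd (xdd t) t)
    (hxddcont : Continuous xdd)
    (hode : ∀ t ≥ (0:ℝ), xdd t + γ t • xd t + lam t • B (x t) = 0) :
    (∃ C : ℝ, ∀ t ≥ (0:ℝ), ‖x t‖ ≤ C) ∧
    IntegrableOn (fun t => ‖xd t‖ ^ 2) (Ici 0) ∧
    IntegrableOn (fun t => ‖xdd t‖ ^ 2) (Ici 0) ∧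
    IntegrableOn (fun t => ‖B (x t)‖ ^ 2) (Ici 0) ∧
    Tendsto xd atTop (𝓝 0) ∧
    Tendsto xdd atTop (𝓝 0) ∧
    Tendsto (fun t => B (x t)) atTop (𝓝 0) ∧
    ∃ p : H, B p = 0 ∧ ∀ z : H, Tendsto (fun t => ⟪x t - p, z⟫) atTop (𝓝 0) := by
  
  obtain ⟨u, hu⟩ := hzer
  -- monotonicity and continuity of the parameters
  have hγmc := ac_aux (fun t => -γ t) (fun t => -γ' t) 0
    (by filter_upwards [hγd] with t ht using ht.neg)
    (by intro t ht; simp only [intervalIntegral.integral_neg]; rw [hγfund t ht]; ring)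
    (by filter_upwards [hA1] with t ht; linarith [ht.1])
    (by filter_upwards [ae_restrict_mem measurableSet_Ici] with t ht; linarith [hγpos t ht])
  have hγm : AntitoneOn γ (Ici 0) := fun a ha b hb hab => by
    have := hγmc.1 ha hb hab
    simp only at this
    linarith
  have hγc : ContinuousOn γ (Ici 0) := hγmc.2.neg.congr (fun t _ => by simp)
  have hγle : ∀ t ≥ (0:ℝ), γ t ≤ γ 0 := fun t ht => hγm (mem_Ici.2 (le_refl (0:ℝ))) ht ht
  have hγ0 := hγpos 0 le_rfl
  have hlamle : ∀ t ≥ (0:ℝ), (1 + θ) / β ≤ γ t ^ 2 / lam t → lam t ≤ β * γ 0 ^ 2 / (1 + θ) := by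
    intro t ht h
    rw [div_le_div_iff₀ hβ (hlampos t ht)] at h
    rw [le_div_iff₀ (by linarith)]
    have : γ t ^ 2 ≤ γ 0 ^ 2 := by
      have := hγle t ht; have := (hγpos t ht).le; gcongr
    nlinarith
  obtain ⟨hlm, hlc⟩ := ac_aux lam lam' (β * γ 0 ^ 2 / (1 + θ)) hlamd hlamfund
    (by filter_upwards [hA1] with t ht using ht.2.1)
    (by filter_upwards [hA1, ae_restrict_mem measurableSet_Ici] with t ht h0
        exact hlamle t h0 ht.2.2)
  have hA : ∀ t ≥ (0:ℝ), (1 + θ) / β ≤ γ t ^ 2 / lam t := by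
    intro t ht
    have h1 : ∀ᵐ s ∂(volume.restrict (Ioi t)), (1 + θ) / β ≤ γ s ^ 2 / lam s := by
      have := ae_restrict_of_ae_restrict_of_subset
        (fun s (hs : s ∈ Ioi t) => (show s ∈ Ici 0 from ht.le.trans (le_of_lt hs))) hA1
      filter_upwards [this] with s hs using hs.2.2
    have : (ae (volume.restrict (Ioi t))).NeBot := by
      rw [ae_neBot, Ne, Measure.restrict_eq_zero]
      simp
    obtain ⟨s, hs, hts⟩ := (h1.and (ae_restrict_mem measurableSet_Ioi)).exists
    have hts' : t ≤ s := le_of_lt hts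
    have hs0 : 0 ≤ s := ht.le.trans hts'
    refine hs.trans ?_
    have h2 := hγm (show t ∈ Ici 0 from ht) (show s ∈ Ici 0 from hs0) hts'
    have h3 := hlm (show t ∈ Ici 0 from ht) (show s ∈ Ici 0 from hs0) hts'
    have h4 := hlampos t ht
    have h5 := hγpos s hs0
    gcongr
  obtain ⟨Λ, hΛdef⟩ : ∃ Λ, Λ = β * γ 0 ^ 2 / (1 + θ) := ⟨_, rfl⟩
  have hΛ0 : 0 < Λ := by rw [hΛdef]; positivity
  have hΛ : ∀ t ≥ (0:ℝ), lam t ≤ Λ := fun t ht => by rw [hΛdef]; exact hlamle t ht (hA t ht)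
  have hl0 := hlampos 0 le_rfl
  have hlge : ∀ t ≥ (0:ℝ), lam 0 ≤ lam t := fun t ht => hlm (mem_Ici.2 (le_refl (0:ℝ))) ht ht
  -- lower bound for γ
  obtain ⟨g, hg0, hg⟩ : ∃ g, 0 < g ∧ ∀ t ≥ (0:ℝ), g ≤ γ t := by
    refine ⟨√((1 + θ) / β * lam 0), Real.sqrt_pos.2 (by positivity), fun t ht => ?_⟩
    rw [Real.sqrt_le_left (hγpos t ht).le]
    have h1 := hA t ht
    rw [le_div_iff₀ (hlampos t ht)] at h1
    refine le_trans ?_ h1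
    have := hlge t ht
    gcongr
  clear hγd hlamd hγfund hlamfund hA1 hγmc hlamle
  have hE := fun v (hv : B v = 0) => energy_aux β hβ B hB v hv γ lam Λ θ hγpos hlampos hγm hγc hlm hlc
    hΛ hA x xd xdd hx hxd hxddcont hode
  have hxc : Continuous x := continuous_iff_continuousAt.2 fun t => (hx t).continuousAt
  have hxdc : Continuous xd := continuous_iff_continuousAt.2 fun t => (hxd t).continuousAt
  have hw : Continuous (fun r => θ * ‖xd r‖ ^ 2 + β / Λ * ‖xdd r‖ ^ 2) := by fun_prop
  have hwnn : ∀ r, 0 ≤ θ * ‖xd r‖ ^ 2 + β / Λ * ‖xdd r‖ ^ 2 := fun r => by positivity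
  have hInn : ∀ s t : ℝ, s ≤ t → 0 ≤ ∫ r in s..t, (θ * ‖xd r‖ ^ 2 + β / Λ * ‖xdd r‖ ^ 2) :=
    fun s t hst => intervalIntegral.integral_nonneg hst (fun r _ => hwnn r)
  obtain ⟨M, hM⟩ : ∃ M, M = ⟪x 0 - u, xd 0⟫ + γ 0 * (1 / 2 * ‖x 0 - u‖ ^ 2)
    + β * (γ 0 / lam 0) * ‖xd 0‖ ^ 2 := ⟨_, rfl⟩
  have hEM : ∀ t ≥ (0:ℝ), ⟪x t - u, xd t⟫ + γ t * (1 / 2 * ‖x t - u‖ ^ 2)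
      + β * (γ t / lam t) * ‖xd t‖ ^ 2
      + ∫ r in (0:ℝ)..t, (θ * ‖xd r‖ ^ 2 + β / Λ * ‖xdd r‖ ^ 2) ≤ M := fun t ht => by
    have := hE u hu 0 t le_rfl ht
    rw [hM]; linarith
  have hpos2 : ∀ t ≥ (0:ℝ), 0 ≤ β * (γ t / lam t) * ‖xd t‖ ^ 2 := fun t ht => by
    have := hγpos t ht; have := hlampos t ht; positivity
  -- boundedness of x
  obtain ⟨R, hR0, hR⟩ : ∃ R, 0 ≤ R ∧ ∀ t ≥ (0:ℝ), ‖x t - u‖ ≤ R := by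
    obtain ⟨K, hK⟩ := bdd_aux (fun t => 1 / 2 * ‖x t - u‖ ^ 2) (fun t => 1 / 2 * (2 * ⟪x t - u, xd t⟫))
      (fun t => (((hx t).sub_const u).norm_sq).const_mul (1 / 2 : ℝ)) g M hg0 (by
        intro t ht
        have h1 := hEM t ht
        have h2 := hInn 0 t ht
        have h3 := hpos2 t ht
        have h4 : g * (1 / 2 * ‖x t - u‖ ^ 2) ≤ γ t * (1 / 2 * ‖x t - u‖ ^ 2) := by
          have := hg t ht; gcongr
        linarith)
    refine ⟨√(2 * K), Real.sqrt_nonneg _, fun t ht => Real.le_sqrt_of_sq_le ?_⟩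
    have := hK t ht
    linarith
  have hin : ∀ t ≥ (0:ℝ), -(R * ‖xd t‖) ≤ ⟪x t - u, xd t⟫ := by
    intro t ht
    have h1 := abs_real_inner_le_norm (x t - u) (xd t)
    have h2 : ‖x t - u‖ * ‖xd t‖ ≤ R * ‖xd t‖ := by have := hR t ht; gcongr
    have h3 := neg_abs_le ⟪x t - u, xd t⟫
    linarith
  -- boundedness of the velocity
  obtain ⟨V, hV0, hV⟩ : ∃ V, 0 ≤ V ∧ ∀ t ≥ (0:ℝ), ‖xd t‖ ≤ V := by
    have hk : 0 < β * (g / Λ) := by positivity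
    refine ⟨max 1 ((|M| + R) / (β * (g / Λ))), le_trans zero_le_one (le_max_left _ _), fun t ht => ?_⟩
    by_cases h1 : ‖xd t‖ ≤ 1
    · exact h1.trans (le_max_left _ _)
    · refine le_trans ?_ (le_max_right _ _)
      push Not at h1
      rw [le_div_iff₀ hk]
      have h2 : β * (g / Λ) * ‖xd t‖ ^ 2 ≤ β * (γ t / lam t) * ‖xd t‖ ^ 2 := by
        have := hg t ht; have := hΛ t ht; have := hlampos t ht; have := hγpos t ht
        gcongr
      have h3 := hEM t ht
      have h4 := hInn 0 t ht
      have h5 := hin t ht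
      have h6 : 0 ≤ γ t * (1 / 2 * ‖x t - u‖ ^ 2) := by have := hγpos t ht; positivity
      have h7 : |M| ≤ |M| * ‖xd t‖ := le_mul_of_one_le_right (abs_nonneg _) h1.le
      have h8 := le_abs_self M
      have h9 : ‖xd t‖ * (‖xd t‖ * (β * (g / Λ))) ≤ ‖xd t‖ * (|M| + R) := by nlinarith
      exact le_of_mul_le_mul_left h9 (by linarith)
  -- integrability
  have hwint : IntegrableOn (fun r => θ * ‖xd r‖ ^ 2 + β / Λ * ‖xdd r‖ ^ 2) (Ici 0) := by
    rw [integrableOn_Ici_iff_integrableOn_Ioi]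
    refine integrableOn_Ioi_of_intervalIntegral_norm_bounded (M + R * V) 0 (b := fun t : ℝ => t)
      (l := atTop) (fun t => hw.integrableOn_Ioc) tendsto_id ?_
    filter_upwards [eventually_ge_atTop 0] with t ht
    have h0 : ∀ r, ‖θ * ‖xd r‖ ^ 2 + β / Λ * ‖xdd r‖ ^ 2‖ = θ * ‖xd r‖ ^ 2 + β / Λ * ‖xdd r‖ ^ 2 :=
      fun r => Real.norm_of_nonneg (hwnn r)
    simp only [h0]
    have h1 := hEM t ht
    have h2 := hpos2 t ht
    have h3 : 0 ≤ γ t * (1 / 2 * ‖x t - u‖ ^ 2) := by have := hγpos t ht; positivity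
    have h4 := hin t ht
    have h5 : R * ‖xd t‖ ≤ R * V := by have := hV t ht; gcongr
    linarith
  have hI1 : IntegrableOn (fun t => ‖xd t‖ ^ 2) (Ici 0) := by
    refine Integrable.mono' (hwint.const_mul (1 / θ)) (by fun_prop) (ae_of_all _ fun t => ?_)
    rw [Real.norm_of_nonneg (by positivity)]
    have : 1 / θ * (θ * ‖xd t‖ ^ 2 + β / Λ * ‖xdd t‖ ^ 2)
      = ‖xd t‖ ^ 2 + 1 / θ * (β / Λ * ‖xdd t‖ ^ 2) := by field_simp
    rw [this]
    have : 0 ≤ 1 / θ * (β / Λ * ‖xdd t‖ ^ 2) := by positivity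
    linarith
  have hI2 : IntegrableOn (fun t => ‖xdd t‖ ^ 2) (Ici 0) := by
    refine Integrable.mono' (hwint.const_mul (Λ / β)) (by fun_prop) (ae_of_all _ fun t => ?_)
    rw [Real.norm_of_nonneg (by positivity)]
    have : Λ / β * (θ * ‖xd t‖ ^ 2 + β / Λ * ‖xdd t‖ ^ 2)
      = ‖xdd t‖ ^ 2 + Λ / β * (θ * ‖xd t‖ ^ 2) := by field_simp; ring
    rw [this]
    have : 0 ≤ Λ / β * (θ * ‖xd t‖ ^ 2) := by positivity
    linarith
  -- Lipschitz continuity of B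
  have hBlip : ∀ a c : H, ‖B a - B c‖ ≤ 1 / β * ‖a - c‖ := by
    intro a c
    have h1 := (hB a c).trans (real_inner_le_norm _ _)
    rw [one_div, ← div_eq_inv_mul, le_div_iff₀ hβ]
    by_cases h : ‖B a - B c‖ = 0
    · rw [h, zero_mul]; positivity
    · have h2 : 0 < ‖B a - B c‖ := lt_of_le_of_ne (norm_nonneg _) (Ne.symm h)
      refine le_of_mul_le_mul_right ?_ h2
      nlinarith
  have hBc : Continuous B := by
    refine (LipschitzWith.of_dist_le_mul (K := ⟨1 / β, by positivity⟩) fun a c => ?_).continuous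
    rw [dist_eq_norm, dist_eq_norm]; exact hBlip a c
  have hBxc : Continuous fun t => B (x t) := hBc.comp hxc
  have hI3 : IntegrableOn (fun t => ‖B (x t)‖ ^ 2) (Ici 0) := by
    refine Integrable.mono' (((hI2.const_mul 2).add (hI1.const_mul (2 * γ 0 ^ 2))).const_mul (1 / lam 0 ^ 2))
      (hBxc.norm.pow 2).aestronglyMeasurable ?_
    filter_upwards [ae_restrict_mem measurableSet_Ici] with t ht
    have ht0 : 0 ≤ t := ht
    rw [Real.norm_of_nonneg (by positivity), one_div, ← div_eq_inv_mul, le_div_iff₀ (by positivity)]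
    simp only [Pi.add_apply]
    have o2 : lam t • B (x t) = -(xdd t + γ t • xd t) := by
      rw [← sub_eq_zero, ← hode t ht0]; abel
    have h1 : lam t * ‖B (x t)‖ ≤ ‖xdd t‖ + γ 0 * ‖xd t‖ := by
      have h2 : ‖lam t • B (x t)‖ ≤ ‖xdd t‖ + ‖γ t • xd t‖ := by
        rw [o2, norm_neg]; exact norm_add_le _ _
      rw [norm_smul, norm_smul, Real.norm_of_nonneg (hlampos t ht0).le,
        Real.norm_of_nonneg (hγpos t ht0).le] at h2
      have h3 : γ t * ‖xd t‖ ≤ γ 0 * ‖xd t‖ := by have := hγle t ht0; gcongr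
      linarith
    have h2 : lam 0 * ‖B (x t)‖ ≤ ‖xdd t‖ + γ 0 * ‖xd t‖ := by
      refine le_trans ?_ h1
      have := hlge t ht0; gcongr
    have h3 : (lam 0 * ‖B (x t)‖) ^ 2 ≤ (‖xdd t‖ + γ 0 * ‖xd t‖) ^ 2 := by gcongr
    nlinarith [sq_nonneg (‖xdd t‖ - γ 0 * ‖xd t‖)]
  -- bounds for B and the acceleration
  have hBb : ∀ t ≥ (0:ℝ), ‖B (x t)‖ ≤ 1 / β * R := by
    intro t ht
    have h1 := hBlip (x t) u
    rw [hu, sub_zero] at h1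
    refine h1.trans ?_
    have := hR t ht; gcongr
  have hddle : ∀ t ≥ (0:ℝ), ‖xdd t‖ ≤ γ 0 * ‖xd t‖ + Λ * ‖B (x t)‖ := by
    intro t ht
    have o1 : xdd t = -(γ t • xd t + lam t • B (x t)) := by
      rw [← sub_eq_zero, ← hode t ht]; abel
    rw [o1, norm_neg]
    refine (norm_add_le _ _).trans ?_
    rw [norm_smul, norm_smul, Real.norm_of_nonneg (hlampos t ht).le,
        Real.norm_of_nonneg (hγpos t ht).le]
    have := hγle t ht; have := hΛ t ht
    gcongr
  have hxlip : ∀ s ≥ (0:ℝ), ∀ t ≥ (0:ℝ), ‖x s - x t‖ ≤ V * |s - t| := by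
    intro s hs t ht
    exact (convex_Ici (0:ℝ)).norm_image_sub_le_of_norm_hasDerivWithin_le
      (fun r _ => (hx r).hasDerivWithinAt) (fun r hr => hV r hr) ht hs
  have hT1 : Tendsto xd atTop (𝓝 0) := by
    refine barb_aux xd (γ 0 * V + Λ * (1 / β * R) + 1) (by positivity) ?_ hI1
    intro s hs t ht
    refine (convex_Ici (0:ℝ)).norm_image_sub_le_of_norm_hasDerivWithin_le
      (fun r _ => (hxd r).hasDerivWithinAt) (fun r hr => ?_) ht hs
    have h1 := hddle r hr
    have h2 : γ 0 * ‖xd r‖ ≤ γ 0 * V := by have := hV r hr; gcongr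
    have h3 : Λ * ‖B (x r)‖ ≤ Λ * (1 / β * R) := by have := hBb r hr; gcongr
    linarith
  have hT3 : Tendsto (fun t => B (x t)) atTop (𝓝 0) := by
    refine barb_aux (fun t => B (x t)) (1 / β * (V + 1)) (by positivity) ?_ hI3
    intro s hs t ht
    refine (hBlip _ _).trans ?_
    rw [mul_assoc]
    have h1 := hxlip s hs t ht
    have h2 : V * |s - t| ≤ (V + 1) * |s - t| := by gcongr; linarith
    have := h1.trans h2
    gcongr
  have hT2 : Tendsto xdd atTop (𝓝 0) := by
    have h1 : Tendsto (fun t => γ 0 * ‖xd t‖ + Λ * ‖B (x t)‖) atTop (𝓝 0) := by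
      simpa using (hT1.norm.const_mul (γ 0)).add (hT3.norm.const_mul Λ)
    refine squeeze_zero_norm' ?_ h1
    filter_upwards [eventually_ge_atTop 0] with t ht using hddle t ht
  have hC : ∀ t ≥ (0:ℝ), ‖x t‖ ≤ R + ‖u‖ := by
    intro t ht
    have h1 : ‖x t‖ ≤ ‖x t - u‖ + ‖u‖ := by simpa using norm_add_le (x t - u) u
    have := hR t ht
    linarith
  refine ⟨⟨R + ‖u‖, hC⟩, hI1, hI2, hI3, hT1, hT2, hT3, opial_aux β hβ B hB x _ hC hT3 ?_⟩
  -- convergence of the distance to every zero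
  intro v hv
  obtain ⟨γl, hγl, hγlim⟩ := lim_aux γ g hγm hg
  have hxv : ∀ t ≥ (0:ℝ), ‖x t - v‖ ≤ R + ‖u‖ + ‖v‖ := fun t ht =>
    (norm_sub_le _ _).trans (by linarith [hC t ht])
  have hin2 : ∀ t ≥ (0:ℝ), |⟪x t - v, xd t⟫| ≤ (R + ‖u‖ + ‖v‖) * ‖xd t‖ := fun t ht =>
    (abs_real_inner_le_norm _ _).trans (by have := hxv t ht; gcongr)
  obtain ⟨l, -, hl⟩ := lim_aux (fun t => ⟪x t - v, xd t⟫ + γ t * (1 / 2 * ‖x t - v‖ ^ 2)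
      + β * (γ t / lam t) * ‖xd t‖ ^ 2) (-((R + ‖u‖ + ‖v‖) * V)) (by
    intro s hs t ht hst
    have h1 := hE v hv s t hs hst
    have h2 := hInn s t hst
    dsimp only
    linarith) (by
    intro t ht
    have h1 := (abs_le.1 (hin2 t ht)).1
    have h2 : (R + ‖u‖ + ‖v‖) * ‖xd t‖ ≤ (R + ‖u‖ + ‖v‖) * V := by have := hV t ht; gcongr
    have h3 := hpos2 t ht
    have h4 : 0 ≤ γ t * (1 / 2 * ‖x t - v‖ ^ 2) := by have := hγpos t ht; positivity
    linarith)
  have hz1 : Tendsto (fun t => ⟪x t - v, xd t⟫) atTop (𝓝 0) := by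
    have h1 : Tendsto (fun t => (R + ‖u‖ + ‖v‖) * ‖xd t‖) atTop (𝓝 0) := by
      simpa using hT1.norm.const_mul (R + ‖u‖ + ‖v‖)
    refine squeeze_zero_norm' ?_ h1
    filter_upwards [eventually_ge_atTop 0] with t ht using hin2 t ht
  have hz2 : Tendsto (fun t => β * (γ t / lam t) * ‖xd t‖ ^ 2) atTop (𝓝 0) := by
    have h1 : Tendsto (fun t => β * (γ 0 / lam 0) * ‖xd t‖ ^ 2) atTop (𝓝 0) := by
      simpa using (hT1.norm.pow 2).const_mul (β * (γ 0 / lam 0))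
    refine squeeze_zero' ?_ ?_ h1
    · filter_upwards [eventually_ge_atTop 0] with t ht using hpos2 t ht
    · filter_upwards [eventually_ge_atTop 0] with t ht
      have := hγle t ht; have := hlge t ht
      gcongr
  have hγl0 : γl ≠ 0 := (lt_of_lt_of_le hg0 hγl).ne'
  refine ⟨_, ((((hl.sub hz1).sub hz2).div hγlim hγl0).const_mul 2).congr' ?_⟩
  filter_upwards [eventually_ge_atTop 0] with t ht
  have := (hγpos t ht).ne'
  simp only [Pi.div_apply]
  field_simp
  ring
end
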